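/- Let T₁,…,T_k be continuous self-maps of a compact metric space X with finite ball dimension D(X), each T_i Lipschitz with Lipschitz constant L(T_i), and set L = max_{1≤i≤k} max{1, L(T_i)}. Then the topological entropy of the skew product σ̃ on Σ_k × X satisfies h(σ̃) ≤ log k + D(X)·log L. -/

import Mathlib

/-!
Two points of `Σ_k × X` whose sequences agree on the first `n + m` symbols and whose second
coordinates are `ε / L ^ n`-close follow the same fibre maps for `n` steps, so during this time
their sequences agree on `m` symbols and their second coordinates stay `ε`-close. At that scale
`k ^ (n + m) * b(ε / L ^ n)` points suffice to shadow all orbits of length `n`. The first factor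
grows at rate `log k`. For `L > 1`, write `log b(r) / n = (log b(r) / |log r|) * (|log r| / n)` with
`r = ε / L ^ n`: the first quotient has upper limit at most `D(X)` and the second tends to `log L`.
For `L = 1`, `b(ε / L ^ n) = b(ε)` does not depend on `n` and contributes nothing to the growth.
-/

open Filter

/-- The discrete uniformity on `Fin k` (inducing the discrete topology). -/
instance (k : ℕ) : UniformSpace (Fin k) := ⊥

/-- The shift map on one-sided sequences. -/
def seqShift {X : Type*} : (ℕ → X) → (ℕ → X) := fun x n => x (n + 1)

/-- The skew product `σ̃` on `Σ_k × X` over the full shift on `Σ_k = {1,…,k}^{ℤ₊}`,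
whose fiber maps are the generators `T i`. -/
def skewProd {X : Type*} {k : ℕ} (T : Fin k → X → X) :
    (ℕ → Fin k) × X → (ℕ → Fin k) × X :=
  fun p => (seqShift p.1, T (p.1 0) p.2)

/-- `b(ε)`: the minimal number of `ε`-balls needed to cover `X`. -/
noncomputable def ballCoverNum (X : Type*) [MetricSpace X] (ε : ℝ) : ℕ :=
  sInf {m : ℕ | ∃ s : Finset X, s.card = m ∧ (⋃ x ∈ s, Metric.ball x ε) = Set.univ}

/-- The ball dimension `D(X) = limsup_{ε→0⁺} log b(ε) / |log ε| ∈ ℝ ∪ {∞}`. -/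
noncomputable def ballDim (X : Type*) [MetricSpace X] : EReal :=
  limsup (fun ε : ℝ => ((Real.log (ballCoverNum X ε) / |Real.log ε| : ℝ) : EReal))
    (nhdsWithin 0 (Set.Ioi 0))

open ExpGrowth Topology Uniformity

section Cylinder

variable {A X : Type*}

lemma exists_forall_agree_mem_of_mem_uniformity [UniformSpace A]
    {V : SetRel (ℕ → A) (ℕ → A)} (hV : V ∈ 𝓤 (ℕ → A)) :
    ∃ m : ℕ, ∀ a b : ℕ → A, (∀ i < m, a i = b i) → (a, b) ∈ V := by
  rw [Pi.uniformity, mem_iInf] at hV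
  obtain ⟨I, hI, W, hW, rfl⟩ := hV
  obtain ⟨N, hN⟩ := hI.bddAbove
  refine ⟨N + 1, fun a b hab ↦ Set.mem_iInter.2 fun i ↦ ?_⟩
  obtain ⟨R, hR, hRW⟩ := hW i
  have hi : a i = b i := hab i (Nat.lt_succ_of_le (hN i.2))
  exact hRW (show (a i, b i) ∈ R from hi ▸ refl_mem_uniformity hR)

/-- The relation on `A^ℕ × X` relating two points when their sequences lie in a common cylinder of
length `m` and their second coordinates are at distance less than `ε`. When `A` is discrete, these
relations form a basis of entourages of `A^ℕ × X`. -/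
def cylinderEntourage (A X : Type*) [PseudoMetricSpace X] (m : ℕ) (ε : ℝ) :
    SetRel ((ℕ → A) × X) ((ℕ → A) × X) :=
  {pq | (∀ i < m, pq.1.1 i = pq.2.1 i) ∧ dist pq.1.2 pq.2.2 < ε}

lemma exists_cylinderEntourage_subset [UniformSpace A] [PseudoMetricSpace X]
    {U : SetRel ((ℕ → A) × X) ((ℕ → A) × X)} (hU : U ∈ 𝓤 ((ℕ → A) × X)) :
    ∃ m : ℕ, ∃ ε > 0, cylinderEntourage A X m ε ⊆ U := by
  rw [uniformity_prod] at hU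
  obtain ⟨_, ⟨V, hV, hVU⟩, _, ⟨W, hW, hWU⟩, rfl⟩ := hU
  obtain ⟨m, hm⟩ := exists_forall_agree_mem_of_mem_uniformity hV
  obtain ⟨ε, hε, hεW⟩ := Metric.mem_uniformity_dist.1 hW
  exact ⟨m, ε, hε, fun _ h ↦ ⟨hVU (hm _ _ h.1), hWU (hεW h.2)⟩⟩

lemma exists_finset_card_le_pow_forall_exists_agree (A : Type*) [Fintype A] [Nonempty A] (m : ℕ) :
    ∃ W : Finset (ℕ → A), W.card ≤ Fintype.card A ^ m ∧
      ∀ a : ℕ → A, ∃ w ∈ W, ∀ i < m, a i = w i := by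
  classical
  let extend (w : Fin m → A) (i : ℕ) : A := if h : i < m then w ⟨i, h⟩ else Classical.arbitrary A
  refine ⟨Finset.univ.image extend, ?_, fun a ↦ ?_⟩
  · exact Finset.card_image_le.trans (by simp)
  · exact ⟨extend fun i ↦ a i, by simp, fun i hi ↦ by simp [extend, hi]⟩

end Cylinder

section BallCover

lemma exists_finset_card_eq_ballCoverNum {X : Type*} [MetricSpace X]
    (hX : TotallyBounded (Set.univ : Set X)) {ε : ℝ} (hε : 0 < ε) :
    ∃ s : Finset X, s.card = ballCoverNum X ε ∧ (⋃ x ∈ s, Metric.ball x ε) = Set.univ := by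
  obtain ⟨t, ht, hcover⟩ := Metric.totallyBounded_iff.1 hX ε hε
  exact Nat.sInf_mem (s := {m | ∃ s : Finset X, s.card = m ∧ _})
    ⟨_, ht.toFinset, rfl, by simpa [Set.univ_subset_iff] using hcover⟩

lemma exists_isCover_cylinderEntourage_card_le (A : Type*) {X : Type*} [Fintype A] [Nonempty A]
    [MetricSpace X] (hX : TotallyBounded (Set.univ : Set X)) (m : ℕ) {ε : ℝ} (hε : 0 < ε) :
    ∃ C : Finset ((ℕ → A) × X), C.card ≤ Fintype.card A ^ m * ballCoverNum X ε ∧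
      SetRel.IsCover (cylinderEntourage A X m ε) Set.univ C := by
  obtain ⟨W, hWcard, hW⟩ := exists_finset_card_le_pow_forall_exists_agree A m
  obtain ⟨s, hscard, hs⟩ := exists_finset_card_eq_ballCoverNum hX hε
  refine ⟨W ×ˢ s, ?_, ?_⟩
  · rw [Finset.card_product, hscard]
    gcongr
  · rintro ⟨a, y⟩ -
    obtain ⟨w, hw, haw⟩ := hW a
    obtain ⟨x, hx, hyx⟩ := Set.mem_iUnion₂.1 (hs.ge (Set.mem_univ y))
    exact ⟨(w, x), Finset.mem_product.2 ⟨hw, hx⟩, haw, hyx⟩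

lemma limsup_log_ballCoverNum_div_abs_log_le_ballDim (X : Type*) [MetricSpace X] {ι : Type*}
    {l : Filter ι} {r : ι → ℝ} (hr : Tendsto r l (𝓝[>] 0)) :
    limsup (fun i ↦ ((Real.log (ballCoverNum X (r i)) / |Real.log (r i)| : ℝ) : EReal)) l ≤
      ballDim X :=
  limsup_le_limsup_of_le (f := map r l)
    (u := fun ε : ℝ ↦ ((Real.log (ballCoverNum X ε) / |Real.log ε| : ℝ) : EReal)) hr

lemma ballDim_nonneg (X : Type*) [MetricSpace X] : 0 ≤ ballDim X :=
  le_limsup_of_frequently_le <| .of_forall fun _ ↦ EReal.coe_nonneg.2 <|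
    div_nonneg (Real.log_natCast_nonneg _) (abs_nonneg _)

lemma ballDim_ne_bot (X : Type*) [MetricSpace X] : ballDim X ≠ ⊥ :=
  (EReal.bot_lt_zero.trans_le (ballDim_nonneg X)).ne'

end BallCover

section Growth

lemma ennreal_log_natCast {b : ℕ} (hb : 0 < b) :
    ENNReal.log (b : ENNReal) = (Real.log b : EReal) := by
  rw [← ENNReal.ofReal_natCast, ENNReal.log_ofReal_of_pos (Nat.cast_pos.2 hb)]

lemma ennreal_log_natCast_le (b : ℕ) : ENNReal.log (b : ENNReal) ≤ (Real.log b : EReal) := by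
  rcases b.eq_zero_or_pos with rfl | hb
  · simp
  · exact (ennreal_log_natCast hb).le

lemma ennreal_log_natCast_div_le (b n : ℕ) {s : ℝ} (hs : s ≠ 0) :
    ENNReal.log (b : ENNReal) / n ≤
      ((Real.log b / s : ℝ) : EReal) * ((s / n : ℝ) : EReal) :=
  calc ENNReal.log (b : ENNReal) / n ≤ (Real.log b : EReal) / n :=
        EReal.monotone_div_right_of_nonneg n.cast_nonneg' (ennreal_log_natCast_le b)
    _ = ((Real.log b / n : ℝ) : EReal) := rfl
    _ = ((Real.log b / s : ℝ) : EReal) * ((s / n : ℝ) : EReal) := by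
        rw [← div_mul_div_cancel₀ hs, EReal.coe_mul]

lemma tendsto_abs_log_div_pow_div_atTop {ε M : ℝ} (hε : 0 < ε) (hM : 1 ≤ M) :
    Tendsto (fun n : ℕ ↦ |Real.log (ε / M ^ n)| / n) atTop (𝓝 (Real.log M)) := by
  have hM₀ : 0 < M := one_pos.trans_le hM
  have hlim : Tendsto (fun n : ℕ ↦ |Real.log ε / n - Real.log M|) atTop (𝓝 (Real.log M)) := by
    simpa [abs_of_nonneg (Real.log_nonneg hM)] using
      ((tendsto_const_div_atTop_nhds_zero_nat (Real.log ε)).sub_const (Real.log M)).abs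
  refine hlim.congr' ?_
  filter_upwards [eventually_ne_atTop 0] with n hn
  have hn₀ : (n : ℝ) ≠ 0 := Nat.cast_ne_zero.2 hn
  rw [Real.log_div hε.ne' (pow_pos hM₀ n).ne', Real.log_pow, ← Nat.abs_cast n, ← abs_div,
    Nat.abs_cast, sub_div, mul_div_cancel_left₀ _ hn₀]

lemma tendsto_div_pow_nhdsGT_zero {ε M : ℝ} (hε : 0 < ε) (hM : 1 < M) :
    Tendsto (fun n : ℕ ↦ ε / M ^ n) atTop (𝓝[>] 0) :=
  tendsto_nhdsWithin_iff.2 ⟨(tendsto_pow_atTop_atTop_of_one_lt hM).const_div_atTop ε,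
    .of_forall fun n ↦ div_pos hε (pow_pos (one_pos.trans hM) n)⟩

lemma expGrowthSup_ballCoverNum_div_pow_le_of_one_lt (X : Type*) [MetricSpace X] {ε M : ℝ}
    (hε : 0 < ε) (hM : 1 < M) :
    expGrowthSup (fun n ↦ (ballCoverNum X (ε / M ^ n) : ENNReal)) ≤
      ballDim X * (Real.log M : EReal) := by
  let b (n : ℕ) : ℕ := ballCoverNum X (ε / M ^ n)
  let dimRatio (n : ℕ) : EReal := (Real.log (b n) / |Real.log (ε / M ^ n)| : ℝ)
  let scaleRate (n : ℕ) : EReal := (|Real.log (ε / M ^ n)| / n : ℝ)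
  have hradius := tendsto_div_pow_nhdsGT_zero hε hM
  have hdim : limsup dimRatio atTop ≤ ballDim X :=
    limsup_log_ballCoverNum_div_abs_log_le_ballDim X hradius
  have hscale : limsup scaleRate atTop = Real.log M :=
    ((continuous_coe_real_ereal.tendsto _).comp
      (tendsto_abs_log_div_pow_div_atTop hε hM.le)).limsup_eq
  have hfactor : ∀ᶠ n in atTop, ENNReal.log (b n) / n ≤ (dimRatio * scaleRate) n := by
    have hsmall : ∀ᶠ n : ℕ in atTop, ε / M ^ n ∈ Set.Ioo 0 1 :=
      hradius.eventually (Ioo_mem_nhdsGT one_pos)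
    filter_upwards [hsmall] with n hn
    exact ennreal_log_natCast_div_le _ _ (abs_ne_zero.2 (Real.log_neg hn.1 hn.2).ne)
  calc expGrowthSup (fun n ↦ (b n : ENNReal)) ≤ limsup (dimRatio * scaleRate) atTop :=
        limsup_le_limsup hfactor
    _ ≤ limsup dimRatio atTop * limsup scaleRate atTop := by
        refine EReal.limsup_mul_le (.of_forall fun n ↦ ?_) (.of_forall fun n ↦ ?_) (.inr ?_)
          (.inr ?_)
        · exact EReal.coe_nonneg.2 (div_nonneg (Real.log_natCast_nonneg _) (abs_nonneg _))
        · exact EReal.coe_nonneg.2 (div_nonneg (abs_nonneg _) n.cast_nonneg)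
        · exact hscale ▸ EReal.coe_ne_top _
        · exact hscale ▸ EReal.coe_ne_zero.2 (Real.log_pos hM).ne'
    _ ≤ ballDim X * (Real.log M : EReal) := by
        rw [hscale]
        exact mul_le_mul_of_nonneg_right hdim (EReal.coe_nonneg.2 (Real.log_nonneg hM.le))

lemma expGrowthSup_ballCoverNum_div_pow_le (X : Type*) [MetricSpace X] {ε M : ℝ}
    (hε : 0 < ε) (hM : 1 ≤ M) :
    expGrowthSup (fun n ↦ (ballCoverNum X (ε / M ^ n) : ENNReal)) ≤
      ballDim X * (Real.log M : EReal) := by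
  rcases hM.eq_or_lt with rfl | hM
  · have hconst : expGrowthSup (fun _ ↦ (ballCoverNum X ε : ENNReal)) ≤
        expGrowthSup (fun _ ↦ 1) :=
      expGrowthSup_le_of_eventually_le (ENNReal.natCast_ne_top _)
        (.of_forall fun _ ↦ (mul_one _).ge)
    simpa [expGrowthSup_const] using hconst
  · exact expGrowthSup_ballCoverNum_div_pow_le_of_one_lt X hε hM

lemma expGrowthSup_pow_add_mul_le {a : ENNReal} (ha₀ : a ≠ 0) (ha : a ≠ ⊤) (m : ℕ)
    (u : ℕ → ENNReal) :
    expGrowthSup (fun n ↦ a ^ (n + m) * u n) ≤ ENNReal.log a + expGrowthSup u := by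
  have hpow : expGrowthSup (fun n ↦ a ^ n) = ENNReal.log a := expGrowthSup_pow
  calc expGrowthSup (fun n ↦ a ^ (n + m) * u n) ≤ expGrowthSup ((fun n ↦ a ^ n) * u) :=
        expGrowthSup_le_of_eventually_le (ENNReal.pow_ne_top ha (n := m))
          (.of_forall fun n ↦ le_of_eq (by rw [Pi.mul_apply]; ring))
    _ ≤ ENNReal.log a + expGrowthSup u :=
        hpow ▸ expGrowthSup_mul_le (.inl (by simpa [hpow])) (.inl (by simpa [hpow]))

end Growth

section SkewProduct

variable {X : Type*} {k : ℕ} {T : Fin k → X → X}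

lemma skewProd_iterate_fst_apply (T : Fin k → X → X) (j : ℕ) (p : (ℕ → Fin k) × X) (i : ℕ) :
    ((skewProd T)^[j] p).1 i = p.1 (i + j) := by
  induction j generalizing p with
  | zero => rfl
  | succ _ ih => exact ih (skewProd T p)

lemma dist_skewProd_iterate_snd_le [PseudoMetricSpace X] {M : NNReal}
    (hT : ∀ i, LipschitzWith M (T i)) (j : ℕ) {p q : (ℕ → Fin k) × X}
    (hpq : ∀ i < j, p.1 i = q.1 i) :
    dist ((skewProd T)^[j] p).2 ((skewProd T)^[j] q).2 ≤ M ^ j * dist p.2 q.2 := by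
  induction j generalizing p q with
  | zero => simp
  | succ j ih =>
    have hstep : dist (skewProd T p).2 (skewProd T q).2 ≤ M * dist p.2 q.2 := by
      simpa only [skewProd, hpq 0 j.succ_pos] using (hT (q.1 0)).dist_le_mul p.2 q.2
    calc dist ((skewProd T)^[j] (skewProd T p)).2 ((skewProd T)^[j] (skewProd T q)).2
        ≤ M ^ j * dist (skewProd T p).2 (skewProd T q).2 :=
          ih fun i hi ↦ hpq (i + 1) (Nat.succ_lt_succ hi)
      _ ≤ M ^ j * (M * dist p.2 q.2) := by gcongr
      _ = M ^ (j + 1) * dist p.2 q.2 := by ring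

lemma cylinderEntourage_subset_dynEntourage_skewProd [PseudoMetricSpace X] {M : NNReal}
    (hM : 1 ≤ M) (hT : ∀ i, LipschitzWith M (T i)) (m n : ℕ) (ε : ℝ) :
    cylinderEntourage (Fin k) X (n + m) (ε / M ^ n) ⊆
      Dynamics.dynEntourage (skewProd T) (cylinderEntourage (Fin k) X m ε) n := by
  rintro ⟨p, q⟩ ⟨hagree, hdist⟩
  refine Dynamics.mem_dynEntourage.2 fun j hj ↦ ⟨fun i hi ↦ ?_, ?_⟩
  · simpa only [skewProd_iterate_fst_apply] using hagree (i + j) (by omega)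
  · have hM₁ : (1 : ℝ) ≤ M := hM
    calc dist ((skewProd T)^[j] p).2 ((skewProd T)^[j] q).2
        ≤ M ^ j * dist p.2 q.2 :=
          dist_skewProd_iterate_snd_le hT j fun i hi ↦ hagree i (by omega)
      _ ≤ M ^ n * dist p.2 q.2 := by gcongr
      _ < ε := (lt_div_iff₀' (by positivity)).1 hdist

variable [MetricSpace X]

lemma coverMincard_skewProd_cylinderEntourage_le (hX : TotallyBounded (Set.univ : Set X))
    (hk : 0 < k) {M : NNReal} (hM : 1 ≤ M) (hT : ∀ i, LipschitzWith M (T i)) (m n : ℕ) {ε : ℝ}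
    (hε : 0 < ε) :
    Dynamics.coverMincard (skewProd T) Set.univ (cylinderEntourage (Fin k) X m ε) n ≤
      (k ^ (n + m) * ballCoverNum X (ε / M ^ n) : ℕ) := by
  have : Nonempty (Fin k) := Fin.pos_iff_nonempty.1 hk
  have hradius : 0 < ε / M ^ n := div_pos hε (pow_pos (one_pos.trans_le hM) n)
  obtain ⟨C, hCcard, hC⟩ := exists_isCover_cylinderEntourage_card_le (Fin k) hX (n + m) hradius
  have hdyn : Dynamics.IsDynCoverOf (skewProd T) Set.univ (cylinderEntourage (Fin k) X m ε) n C :=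
    hC.mono_entourage (cylinderEntourage_subset_dynEntourage_skewProd hM hT m n ε)
  rw [Fintype.card_fin] at hCcard
  exact hdyn.coverMincard_le_card.trans (Nat.cast_le.2 hCcard)

lemma coverEntropyEntourage_skewProd_cylinderEntourage_le
    (hX : TotallyBounded (Set.univ : Set X)) (hk : 0 < k) {M : NNReal} (hM : 1 ≤ M)
    (hT : ∀ i, LipschitzWith M (T i)) (m : ℕ) {ε : ℝ} (hε : 0 < ε) :
    Dynamics.coverEntropyEntourage (skewProd T) Set.univ (cylinderEntourage (Fin k) X m ε) ≤
      (Real.log k : EReal) + ballDim X * (Real.log M : EReal) := by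
  have hcard (n : ℕ) :
      (Dynamics.coverMincard (skewProd T) Set.univ (cylinderEntourage (Fin k) X m ε) n : ENNReal) ≤
        (k : ENNReal) ^ (n + m) * ballCoverNum X (ε / M ^ n) := by
    exact_mod_cast ENat.toENNReal_mono
      (coverMincard_skewProd_cylinderEntourage_le hX hk hM hT m n hε)
  calc Dynamics.coverEntropyEntourage (skewProd T) Set.univ (cylinderEntourage (Fin k) X m ε)
      ≤ expGrowthSup (fun n ↦ (k : ENNReal) ^ (n + m) * ballCoverNum X (ε / M ^ n)) :=
        expGrowthSup_monotone hcard
    _ ≤ ENNReal.log k + expGrowthSup (fun n ↦ (ballCoverNum X (ε / M ^ n) : ENNReal)) :=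
        expGrowthSup_pow_add_mul_le (Nat.cast_ne_zero.2 hk.ne') (ENNReal.natCast_ne_top k) m _
    _ ≤ (Real.log k : EReal) + ballDim X * (Real.log M : EReal) := by
        rw [ennreal_log_natCast hk]
        gcongr
        exact expGrowthSup_ballCoverNum_div_pow_le X hε hM

lemma coverEntropy_skewProd_le_of_lipschitzWith (hX : TotallyBounded (Set.univ : Set X))
    (hk : 0 < k) {M : NNReal} (hM : 1 ≤ M) (hT : ∀ i, LipschitzWith M (T i)) :
    Dynamics.coverEntropy (skewProd T) (Set.univ : Set ((ℕ → Fin k) × X)) ≤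
      (Real.log k : EReal) + ballDim X * (Real.log M : EReal) := by
  refine iSup₂_le fun U hU ↦ ?_
  obtain ⟨m, ε, hε, hsub⟩ := exists_cylinderEntourage_subset hU
  exact (Dynamics.coverEntropyEntourage_antitone _ _ hsub).trans
    (coverEntropyEntourage_skewProd_cylinderEntourage_le hX hk hM hT m hε)

theorem coverEntropy_skewProd_le_general (hX : TotallyBounded (Set.univ : Set X)) (hk : 0 < k)
    (T : Fin k → X → X) (L : Fin k → NNReal) (hL : ∀ i, LipschitzWith (L i) (T i)) :
    Dynamics.coverEntropy (skewProd T) (Set.univ : Set ((ℕ → Fin k) × X)) ≤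
      (Real.log k : EReal) + ballDim X * (Real.log (⨆ i : Fin k, max 1 (L i : ℝ)) : EReal) := by
  have hle (i : Fin k) : max 1 (L i) ≤ ⨆ i, max 1 (L i) :=
    le_ciSup (f := fun i ↦ max 1 (L i)) (Set.finite_range _).bddAbove i
  have hM : 1 ≤ ⨆ i, max 1 (L i) := (le_max_left _ _).trans (hle ⟨0, hk⟩)
  have hT (i : Fin k) : LipschitzWith (⨆ i, max 1 (L i)) (T i) :=
    (hL i).weaken ((le_max_right _ _).trans (hle i))
  simpa using coverEntropy_skewProd_le_of_lipschitzWith hX hk hM hT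

end SkewProduct

/-- if `X` has finite ball dimension and each `T i` is Lipschitz with
constant `L i`, with `L = maxᵢ max{1, L i}`, then the topological entropy of the skew
product `σ̃` on `Σ_k × X` is at most `log k + D(X) · log L`. -/
theorem coverEntropy_skewProd_le {X : Type*} [MetricSpace X] [CompactSpace X] {k : ℕ}
    (hk : 0 < k) (T : Fin k → X → X) (L : Fin k → NNReal) (hL : ∀ i, LipschitzWith (L i) (T i))
    (hD : ballDim X ≠ ⊤) :
    Dynamics.coverEntropy (skewProd T) (Set.univ : Set ((ℕ → Fin k) × X)) ≤
      ((Real.log k + (ballDim X).toReal * Real.log (⨆ i : Fin k, max 1 (L i : ℝ)) : ℝ) : EReal) := by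
  simpa [EReal.coe_toReal hD (ballDim_ne_bot X)] using
    coverEntropy_skewProd_le_general isCompact_univ.totallyBounded hk T L hL
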